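/- Assume |q_α| > max(1, ‖θ‖_T) and 1 > ζ > 1 − (1/(T+1)) F_α(|q_α| + ‖θ‖_T) e^{‖θ‖_T²}. Then the unconstrained optimal strategy ν* given by y*_t = θ_t and v*_t = 1/ω(t) satisfies the ES constraint at level ζ, and consequently ν* maximizes J(x,·) over all ν ∈ U satisfying the ES constraint at level ζ. -/

import Mathlib

open MeasureTheory Real Set Filter
open scoped RealInnerProductSpace ENNReal

noncomputable section

abbrev E (d : ℕ) := EuclideanSpace ℝ (Fin d)

/-- ω(t) = T − t + 1 -/
def om (T t : ℝ) : ℝ := T - t + 1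

/-- running L²-norm ‖y‖_t = (∫₀^t |y_s|² ds)^{1/2} -/
def nrm {d : ℕ} (y : ℝ → E d) (t : ℝ) : ℝ :=
  Real.sqrt (∫ s in Set.Ioc (0:ℝ) t, ‖y s‖ ^ 2)

/-- running inner product (y,θ)_t = ∫₀^t y_s'θ_s ds -/
def ipr {d : ℕ} (y θ : ℝ → E d) (t : ℝ) : ℝ :=
  ∫ s in Set.Ioc (0:ℝ) t, ⟪y s, θ s⟫

/-- membership in L²([0,T];ℝ^d) -/
def L2fun {d : ℕ} (T : ℝ) (y : ℝ → E d) : Prop :=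
  Measurable y ∧ IntegrableOn (fun t => ‖y t‖ ^ 2) (Set.Ioc 0 T)

def k1 {d : ℕ} (T : ℝ) (θ : ℝ → E d) : ℝ :=
  ∫ t in Set.Ioc (0:ℝ) T, om T t * ‖θ t‖ ^ 2

def k2 {d : ℕ} (T : ℝ) (θ : ℝ → E d) : ℝ :=
  ∫ t in Set.Ioc (0:ℝ) T, om T t ^ 2 * ‖θ t‖ ^ 2

/-- Mills ratio ϖ(z) = e^{z²/2}∫_z^∞ e^{-s²/2} ds -/
def mills (z : ℝ) : ℝ := Real.exp (z ^ 2 / 2) * ∫ s in Set.Ioi z, Real.exp (-s ^ 2 / 2)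

/-- ι_α(u) = 1/ϖ(u + |q_α|) − u -/
def iotaA (qa u : ℝ) : ℝ := 1 / mills (u + |qa|) - u

/-- F_α(z) = (∫_z^∞ e^{-s²/2} ds)/(∫_{|q_α|}^∞ e^{-s²/2} ds) -/
def Fal (qa z : ℝ) : ℝ :=
  (∫ s in Set.Ioi z, Real.exp (-s ^ 2 / 2)) / ∫ s in Set.Ioi |qa|, Real.exp (-s ^ 2 / 2)

/-- f_α(x) = ln F_α(|q_α| + x) -/
def fal (qa x : ℝ) : ℝ := Real.log (Fal qa (|qa| + x))

/-- G₁(u,λ) -/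
def G1fun {d : ℕ} (T : ℝ) (θ : ℝ → E d) (qa u lam : ℝ) : ℝ :=
  ∫ t in Set.Ioc (0:ℝ) T,
    (om T t + lam) ^ 2 * ‖θ t‖ ^ 2 / (lam * iotaA qa u + u * (om T t + lam)) ^ 2

open Classical in
/-- ρ₁(λ) = inf{u ≥ 0 : G₁(u,λ) ≤ 1}, with value +∞ if no such u exists -/
def rho1 {d : ℕ} (T : ℝ) (θ : ℝ → E d) (qa lam : ℝ) : ℝ≥0∞ :=
  if {u : ℝ | 0 ≤ u ∧ G1fun T θ qa u lam ≤ 1}.Nonempty then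
    ENNReal.ofReal (sInf {u : ℝ | 0 ≤ u ∧ G1fun T θ qa u lam ≤ 1})
  else ⊤

open Classical in
/-- ς_λ(t), with ς_λ ≡ 1 if ρ₁(λ) = +∞ -/
def sig {d : ℕ} (T : ℝ) (θ : ℝ → E d) (qa lam t : ℝ) : ℝ :=
  if rho1 T θ qa lam = ⊤ then 1
  else (rho1 T θ qa lam).toReal * (om T t + lam) /
    (lam * iotaA qa (rho1 T θ qa lam).toReal + (rho1 T θ qa lam).toReal * (om T t + lam))

def lamMax' {d : ℕ} (T : ℝ) (θ : ℝ → E d) (qa : ℝ) : ℝ :=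
  (k1 T θ + Real.sqrt (k2 T θ * (iotaA qa 0 ^ 2 - nrm θ T ^ 2) + k1 T θ ^ 2)) /
    (iotaA qa 0 ^ 2 - nrm θ T ^ 2)

/-- Φ₁(λ) = −∫₀^T ς_λ(t)|θ_t|² dt − ln F_α(|q_α| + ‖ς_λθ‖_T) -/
def Phi1 {d : ℕ} (T : ℝ) (θ : ℝ → E d) (qa lam : ℝ) : ℝ :=
  -(∫ t in Set.Ioc (0:ℝ) T, sig T θ qa lam t * ‖θ t‖ ^ 2)
    - Real.log (Fal qa (|qa| + nrm (fun t => sig T θ qa lam t • θ t) T))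

/-- cumulated consumption V_t = ∫₀^t v_s ds -/
def Vtot (v : ℝ → ℝ) (t : ℝ) : ℝ := ∫ s in Set.Ioc (0:ℝ) t, v s

/-- the set U of admissible deterministic strategies -/
def Admiss {d : ℕ} (T : ℝ) (y : ℝ → E d) (v : ℝ → ℝ) : Prop :=
  Measurable y ∧ IntegrableOn (fun t => ‖y t‖ ^ 2) (Set.Ioc 0 T) ∧
    Measurable v ∧ (∀ t ∈ Set.Icc (0:ℝ) T, 0 < v t) ∧
    IntegrableOn v (Set.Ioc 0 T) ∧
    IntegrableOn (fun t => max (-Real.log (v t)) 0) (Set.Ioc 0 T)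

/-- the cost J(x,ν) -/
def Jcost {d : ℕ} (T x : ℝ) (r : ℝ → ℝ) (θ y : ℝ → E d) (v : ℝ → ℝ) : ℝ :=
  (T + 1) * Real.log x
    + (∫ t in Set.Ioc (0:ℝ) T, om T t * (r t + ⟪y t, θ t⟫ - ‖y t‖ ^ 2 / 2))
    + (∫ t in Set.Ioc (0:ℝ) T, (Real.log (v t) - Vtot v t))
    - Vtot v T

/-- A(x) = (T+1)ln x + ∫₀^T ω(t)r_t dt − T ln T -/
def Aconst (T x : ℝ) (r : ℝ → ℝ) : ℝ :=
  (T + 1) * Real.log x + (∫ t in Set.Ioc (0:ℝ) T, om T t * r t) - T * Real.log T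

/-- v^κ_t = κ/(T − tκ) -/
def vk (T k t : ℝ) : ℝ := k / (T - t * k)

/-- the VaR constraint at level ζ -/
def VaROK {d : ℕ} (T : ℝ) (θ y : ℝ → E d) (v : ℝ → ℝ) (qa z : ℝ) : Prop :=
  ∀ t ∈ Set.Icc (0:ℝ) T,
    Real.log (1 - z) ≤ ipr y θ t - nrm y t ^ 2 / 2 - Vtot v t - |qa| * nrm y t

/-- the ES constraint at level ζ -/
def ESOK {d : ℕ} (T : ℝ) (θ y : ℝ → E d) (v : ℝ → ℝ) (qa z : ℝ) : Prop :=
  ∀ t ∈ Set.Icc (0:ℝ) T,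
    Real.log (1 - z) ≤ ipr y θ t - Vtot v t + fal qa (nrm y t)

/-!
For `y = θ` the constraint reads `‖θ‖_t² + f_α(‖θ‖_t) - V_t ≥ ln (1 - ζ)`. Completing the square in
the Gaussian tail gives
`u² + f_α(u) = ((|q_α| - u)² - q_α²) / 2 + ln ϖ(|q_α| + u) - ln ϖ(|q_α|)`,
and the Mills ratio `ϖ(z) = ∫₀^∞ e^{-zs - s²/2} ds` is visibly decreasing, so `u ↦ u² + f_α(u)`
decreases on `(-∞, |q_α|]`. Since `‖θ‖_t` and `V_t` increase with `t`, the constraint is tightest at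
`t = T`, where `V*_T = ln (T + 1)` turns it into the assumed bound on `ζ`.

By Fubini `∫₀ᵀ V_t dt + V_T = ∫₀ᵀ ω(t) v_t dt`, so the cost is the integral of a function of
`(t, y_t, v_t)`, which `y_t = θ_t` and `v_t = 1 / ω(t)` maximise for each `t` separately.
-/

section
variable {Ω F : Type*} [MeasurableSpace Ω] {μ : Measure Ω}
  [NormedAddCommGroup F] [InnerProductSpace ℝ F]

lemma integrable_inner_of_memLp_two {f g : Ω → F} (hf : MemLp f 2 μ) (hg : MemLp g 2 μ) :
    Integrable (fun t => ⟪f t, g t⟫) μ :=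
  (hf.norm.integrable_mul hg.norm).mono' (hf.1.inner hg.1)
    (ae_of_all _ fun _ => norm_inner_le_norm _ _)

lemma integrable_log_of_integrable_max_neg_log {v : Ω → ℝ} (hv : Integrable v μ)
    (hv0 : ∀ᵐ t ∂μ, 0 < v t) (hneg : Integrable (fun t => max (-log (v t)) 0) μ) :
    Integrable (fun t => log (v t)) μ := by
  refine (hv.add hneg).mono' hv.1.aemeasurable.log.aestronglyMeasurable ?_
  filter_upwards [hv0] with t ht
  have hle : log (v t) ≤ v t := log_le_self ht.le
  rw [norm_eq_abs, abs_le, Pi.add_apply]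
  constructor <;> linarith [le_max_left (-log (v t)) 0, le_max_right (-log (v t)) 0]

lemma real_inner_sub_norm_sq_div_two_le (y θ : F) :
    ⟪y, θ⟫ - ‖y‖ ^ 2 / 2 ≤ ⟪θ, θ⟫ - ‖θ‖ ^ 2 / 2 := by
  rw [real_inner_self_eq_norm_sq]
  linarith [sq_nonneg ‖y - θ‖, norm_sub_sq_real y θ]

end

lemma log_sub_mul_le {w v : ℝ} (hw : 0 < w) (hv : 0 < v) :
    log v - w * v ≤ log (1 / w) - w * (1 / w) := by
  have hlog : log w + log v ≤ w * v - 1 :=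
    log_mul hw.ne' hv.ne' ▸ log_le_sub_one_of_pos (mul_pos hw hv)
  rw [mul_one_div_cancel hw.ne', one_div, log_inv]
  linarith

lemma integral_Ioi_comp_add_right {F : Type*} [NormedAddCommGroup F] [NormedSpace ℝ F]
    (f : ℝ → F) (a c : ℝ) : ∫ s in Ioi a, f (s + c) = ∫ s in Ioi (a + c), f s := by
  simpa only [preimage_add_const_Ioi, add_sub_cancel_right] using
    (measurePreserving_add_right volume c).setIntegral_preimage_emb
      (measurableEmbedding_addRight c) f (Ioi (a + c))

lemma integral_Ioc_integral_Ioc {F : Type*} [NormedAddCommGroup F] [NormedSpace ℝ F]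
    [CompleteSpace F] {a b : ℝ} {f : ℝ → F} (hf : IntegrableOn f (Ioc a b)) :
    ∫ t in Ioc a b, ∫ s in Ioc a t, f s = ∫ s in Ioc a b, (b - s) • f s := by
  set μ : Measure ℝ := volume.restrict (Ioc a b)
  have hint : Integrable (Function.uncurry fun t s => (Iic t).indicator f s) (μ.prod μ) :=
    (Integrable.comp_snd (μ := μ) hf).indicator (measurableSet_le measurable_snd measurable_fst)
  calc ∫ t, (∫ s in Ioc a t, f s) ∂μ = ∫ t, ∫ s, (Iic t).indicator f s ∂μ ∂μ := by
        refine setIntegral_congr_fun measurableSet_Ioc fun t ht => ?_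
        simp only [μ]
        rw [setIntegral_indicator measurableSet_Iic, Ioc_inter_Iic, min_eq_right ht.2]
    _ = ∫ s, ∫ t, (Iic t).indicator f s ∂μ ∂μ := integral_integral_swap hint
    _ = ∫ s, (b - s) • f s ∂μ := by
        refine setIntegral_congr_fun measurableSet_Ioc fun s hs => ?_
        have hIcc : Ioc a b ∩ Ici s = Icc s b := by
          rw [← Ioi_inter_Iic, inter_right_comm,
            inter_eq_self_of_subset_right (Ici_subset_Ioi.2 hs.1), Ici_inter_Iic]
        calc ∫ t, (Iic t).indicator f s ∂μ = ∫ t, (Ici s).indicator (fun _ => f s) t ∂μ := rfl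
          _ = (b - s) • f s := by
              rw [setIntegral_indicator measurableSet_Ici, hIcc, setIntegral_const,
                volume_real_Icc_of_le hs.2]

lemma integrable_exp_neg_sq_div_two : Integrable fun s : ℝ => exp (-s ^ 2 / 2) := by
  convert integrable_exp_neg_mul_sq (b := 1 / 2) (by norm_num) using 3
  ring

lemma integral_Ioi_exp_neg_sq_div_two_pos (z : ℝ) : 0 < ∫ s in Ioi z, exp (-s ^ 2 / 2) := by
  have : NeZero (volume.restrict (Ioi z)) := ⟨by simp⟩
  exact integral_exp_pos integrable_exp_neg_sq_div_two.integrableOn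

lemma exp_mul_exp_neg_add_sq (z s : ℝ) :
    exp (z ^ 2 / 2) * exp (-(s + z) ^ 2 / 2) = exp (-(z * s) - s ^ 2 / 2) := by
  rw [← exp_add]
  ring_nf

lemma integrable_exp_neg_mul_sub_sq (z : ℝ) :
    Integrable fun s : ℝ => exp (-(z * s) - s ^ 2 / 2) := by
  simp only [← exp_mul_exp_neg_add_sq]
  exact (integrable_exp_neg_sq_div_two.comp_add_right z).const_mul _

lemma mills_eq_integral (z : ℝ) : mills z = ∫ s in Ioi 0, exp (-(z * s) - s ^ 2 / 2) := by
  simp only [← exp_mul_exp_neg_add_sq]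
  rw [integral_const_mul, integral_Ioi_comp_add_right fun s => exp (-s ^ 2 / 2), zero_add, mills]

lemma mills_pos (z : ℝ) : 0 < mills z :=
  mul_pos (exp_pos _) (integral_Ioi_exp_neg_sq_div_two_pos z)

lemma antitone_mills : Antitone mills := by
  intro z w hzw
  rw [mills_eq_integral, mills_eq_integral]
  refine setIntegral_mono_on (integrable_exp_neg_mul_sub_sq w).integrableOn
    (integrable_exp_neg_mul_sub_sq z).integrableOn measurableSet_Ioi fun s hs => exp_le_exp.2 ?_
  linarith [mul_le_mul_of_nonneg_right hzw (mem_Ioi.1 hs).le]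

lemma log_mills (z : ℝ) :
    log (mills z) = z ^ 2 / 2 + log (∫ s in Ioi z, exp (-s ^ 2 / 2)) := by
  rw [mills, log_mul (exp_ne_zero _) (integral_Ioi_exp_neg_sq_div_two_pos z).ne', log_exp]

lemma Fal_pos (q z : ℝ) : 0 < Fal q z :=
  div_pos (integral_Ioi_exp_neg_sq_div_two_pos z) (integral_Ioi_exp_neg_sq_div_two_pos |q|)

lemma sq_add_fal (q u : ℝ) :
    u ^ 2 + fal q u =
      ((|q| - u) ^ 2 - |q| ^ 2) / 2 + log (mills (|q| + u)) - log (mills |q|) := by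
  rw [fal, Fal, log_div (integral_Ioi_exp_neg_sq_div_two_pos _).ne'
    (integral_Ioi_exp_neg_sq_div_two_pos _).ne', log_mills, log_mills]
  ring

lemma antitoneOn_sq_add_fal (q : ℝ) : AntitoneOn (fun u => u ^ 2 + fal q u) (Iic |q|) := by
  intro u _ w hw huw
  have hsq : (|q| - w) ^ 2 ≤ (|q| - u) ^ 2 :=
    pow_le_pow_left₀ (sub_nonneg.2 hw) (sub_le_sub_left huw _) 2
  have hmills : log (mills (|q| + w)) ≤ log (mills (|q| + u)) :=
    log_le_log (mills_pos _) (antitone_mills (add_le_add_right huw _))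
  simp only [sq_add_fal]
  linarith

lemma nrm_sq {d : ℕ} (y : ℝ → E d) (t : ℝ) : nrm y t ^ 2 = ∫ s in Ioc 0 t, ‖y s‖ ^ 2 :=
  sq_sqrt (integral_nonneg fun _ => sq_nonneg _)

lemma ipr_self {d : ℕ} (y : ℝ → E d) (t : ℝ) : ipr y y t = nrm y t ^ 2 := by
  simp only [ipr, nrm_sq, real_inner_self_eq_norm_sq]

lemma nrm_le_nrm {d : ℕ} {y : ℝ → E d} {t T : ℝ}
    (hy : IntegrableOn (fun s => ‖y s‖ ^ 2) (Ioc 0 T)) (htT : t ≤ T) : nrm y t ≤ nrm y T :=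
  sqrt_le_sqrt (setIntegral_mono_set hy (ae_of_all _ fun _ => sq_nonneg _)
    (Ioc_subset_Ioc_right htT).eventuallyLE)

lemma Vtot_le_Vtot {v : ℝ → ℝ} {t T : ℝ} (hv : IntegrableOn v (Ioc 0 T))
    (hv0 : ∀ s ∈ Ioc 0 T, 0 ≤ v s) (htT : t ≤ T) : Vtot v t ≤ Vtot v T :=
  setIntegral_mono_set hv ((ae_restrict_iff' measurableSet_Ioc).2 (ae_of_all _ hv0))
    (Ioc_subset_Ioc_right htT).eventuallyLE

lemma ESOK_self_of_terminal {d : ℕ} {T q z : ℝ} {θ : ℝ → E d} {v : ℝ → ℝ}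
    (hθ : IntegrableOn (fun t => ‖θ t‖ ^ 2) (Ioc 0 T)) (hv : IntegrableOn v (Ioc 0 T))
    (hv0 : ∀ s ∈ Ioc 0 T, 0 ≤ v s) (hq : nrm θ T ≤ |q|)
    (hz : log (1 - z) ≤ nrm θ T ^ 2 - Vtot v T + fal q (nrm θ T)) : ESOK T θ θ v q z := by
  intro t ⟨_, htT⟩
  have hnrm : nrm θ t ≤ nrm θ T := nrm_le_nrm hθ htT
  have hfal : nrm θ T ^ 2 + fal q (nrm θ T) ≤ nrm θ t ^ 2 + fal q (nrm θ t) :=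
    antitoneOn_sq_add_fal q (hnrm.trans hq) hq hnrm
  have hV : Vtot v t ≤ Vtot v T := Vtot_le_Vtot hv hv0 htT
  rw [ipr_self]
  linarith

lemma om_pos {T t : ℝ} (h : t ≤ T) : 0 < om T t := by
  unfold om
  linarith

lemma continuous_om (T : ℝ) : Continuous (om T) := by
  unfold om
  fun_prop

lemma integrableOn_om_mul {a b : ℝ} {f : ℝ → ℝ} (T : ℝ) (hf : IntegrableOn f (Ioc a b)) :
    IntegrableOn (fun t => om T t * f t) (Ioc a b) :=
  hf.continuousOn_mul_of_subset (continuous_om T).continuousOn isCompact_Icc measurableSet_Ioc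
    Ioc_subset_Icc_self

lemma continuousOn_one_div_om (T : ℝ) : ContinuousOn (fun t => 1 / om T t) (Icc 0 T) :=
  continuousOn_const.div (continuous_om T).continuousOn fun _ ht => (om_pos ht.2).ne'

lemma admiss_one_div_om {d : ℕ} {T : ℝ} {y : ℝ → E d} (hy : Measurable y)
    (hy2 : IntegrableOn (fun t => ‖y t‖ ^ 2) (Ioc 0 T)) : Admiss T y fun t => 1 / om T t := by
  have hpos : ∀ t ∈ Icc 0 T, 0 < 1 / om T t := fun t ht => one_div_pos.2 (om_pos ht.2)
  have hlog : ContinuousOn (fun t => max (-log (1 / om T t)) 0) (Icc 0 T) :=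
    ((continuousOn_one_div_om T).log fun t ht => (hpos t ht).ne').neg.sup continuousOn_const
  exact ⟨hy, hy2, measurable_const.div (continuous_om T).measurable, hpos,
    (continuousOn_one_div_om T).integrableOn_Icc.mono_set Ioc_subset_Icc_self,
    hlog.integrableOn_Icc.mono_set Ioc_subset_Icc_self⟩

lemma Vtot_one_div_om {T : ℝ} (hT : 0 ≤ T) : Vtot (fun t => 1 / om T t) T = log (T + 1) := by
  have hom (t : ℝ) : om T t = T + 1 - t := by
    unfold om
    ring
  simp only [Vtot, hom]
  rw [← intervalIntegral.integral_of_le hT,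
    intervalIntegral.integral_comp_sub_left (fun t => 1 / t) (T + 1), add_sub_cancel_left, sub_zero,
    integral_one_div_of_pos one_pos (by linarith), div_one]

lemma log_one_sub_le_of_one_sub_le {T q u z : ℝ} (hT : 0 < T + 1) (hz1 : z < 1)
    (hz : 1 - 1 / (T + 1) * Fal q (|q| + u) * exp (u ^ 2) ≤ z) :
    log (1 - z) ≤ u ^ 2 - log (T + 1) + fal q u := by
  have hF : 0 < Fal q (|q| + u) := Fal_pos q _
  calc log (1 - z) ≤ log (1 / (T + 1) * Fal q (|q| + u) * exp (u ^ 2)) :=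
        log_le_log (sub_pos.2 hz1) (by linarith)
    _ = u ^ 2 - log (T + 1) + fal q u := by
        rw [log_mul (by positivity) (exp_ne_zero _), log_exp, log_mul (by positivity) hF.ne',
          one_div, log_inv, fal]
        ring

lemma integrableOn_Vtot {T : ℝ} {v : ℝ → ℝ} (hv : IntegrableOn v (Ioc 0 T)) :
    IntegrableOn (Vtot v) (Ioc 0 T) :=
  (intervalIntegral.continuousOn_primitive
    (hv.congr_set_ae Ioc_ae_eq_Icc.symm)).integrableOn_Icc.mono_set Ioc_subset_Icc_self

lemma integral_Vtot_add_Vtot {T : ℝ} {v : ℝ → ℝ} (hv : IntegrableOn v (Ioc 0 T)) :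
    (∫ t in Ioc 0 T, Vtot v t) + Vtot v T = ∫ t in Ioc 0 T, om T t * v t := by
  have hsub : IntegrableOn (fun t => (T - t) • v t) (Ioc 0 T) := by
    convert (integrableOn_om_mul T hv).sub hv using 2 with t
    simp only [om, smul_eq_mul, Pi.sub_apply]
    ring
  simp only [Vtot]
  rw [integral_Ioc_integral_Ioc hv, ← integral_add hsub hv]
  simp only [om, smul_eq_mul, add_one_mul]

namespace Admiss

variable {d : ℕ} {T : ℝ} {r : ℝ → ℝ} {θ y : ℝ → E d} {v : ℝ → ℝ}

lemma pos (h : Admiss T y v) : ∀ t ∈ Ioc 0 T, 0 < v t :=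
  fun t ht => h.2.2.2.1 t (Ioc_subset_Icc_self ht)

lemma integrableOn (h : Admiss T y v) : IntegrableOn v (Ioc 0 T) :=
  h.2.2.2.2.1

lemma memLp_two (h : Admiss T y v) : MemLp y 2 (volume.restrict (Ioc 0 T)) :=
  (memLp_two_iff_integrable_sq_norm h.1.aestronglyMeasurable).2 h.2.1

lemma integrableOn_log (h : Admiss T y v) : IntegrableOn (fun t => log (v t)) (Ioc 0 T) :=
  integrable_log_of_integrable_max_neg_log h.integrableOn
    ((ae_restrict_iff' measurableSet_Ioc).2 (ae_of_all _ h.pos)) h.2.2.2.2.2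

lemma integrableOn_log_sub_om_mul (h : Admiss T y v) :
    IntegrableOn (fun t => log (v t) - om T t * v t) (Ioc 0 T) :=
  h.integrableOn_log.sub (integrableOn_om_mul T h.integrableOn)

lemma integrableOn_om_mul_return (h : Admiss T y v) (hr : IntegrableOn r (Ioc 0 T))
    (hθ : MemLp θ 2 (volume.restrict (Ioc 0 T))) :
    IntegrableOn (fun t => om T t * (r t + ⟪y t, θ t⟫ - ‖y t‖ ^ 2 / 2)) (Ioc 0 T) :=
  integrableOn_om_mul T
    ((hr.add (integrable_inner_of_memLp_two h.memLp_two hθ)).sub (h.2.1.div_const 2))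

lemma Jcost_eq (h : Admiss T y v) (x : ℝ) (r : ℝ → ℝ) (θ : ℝ → E d) :
    Jcost T x r θ y v = (T + 1) * log x
      + (∫ t in Ioc 0 T, om T t * (r t + ⟪y t, θ t⟫ - ‖y t‖ ^ 2 / 2))
      + ∫ t in Ioc 0 T, (log (v t) - om T t * v t) := by
  rw [Jcost, integral_sub h.integrableOn_log (integrableOn_Vtot h.integrableOn),
    integral_sub h.integrableOn_log (integrableOn_om_mul T h.integrableOn),
    ← integral_Vtot_add_Vtot h.integrableOn]
  ring

lemma Jcost_le (h : Admiss T y v) (hθ : Admiss T θ fun t => 1 / om T t)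
    (hr : IntegrableOn r (Ioc 0 T)) (x : ℝ) :
    Jcost T x r θ y v ≤ Jcost T x r θ θ fun t => 1 / om T t := by
  rw [h.Jcost_eq, hθ.Jcost_eq]
  refine add_le_add (add_le_add_right ?investment _) ?consumption
  case investment =>
    refine setIntegral_mono_on (h.integrableOn_om_mul_return hr hθ.memLp_two)
      (hθ.integrableOn_om_mul_return hr hθ.memLp_two) measurableSet_Ioc fun t ht =>
      mul_le_mul_of_nonneg_left ?_ (om_pos ht.2).le
    linarith [real_inner_sub_norm_sq_div_two_le (y t) (θ t)]
  case consumption =>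
    exact setIntegral_mono_on h.integrableOn_log_sub_om_mul hθ.integrableOn_log_sub_om_mul
      measurableSet_Ioc fun t ht => log_sub_mul_le (om_pos ht.2) (h.pos t ht)

end Admiss

theorem stmt12_general {d : ℕ} {T : ℝ} (hT : 0 ≤ T) (θ : ℝ → E d) (hθm : Measurable θ)
    (hθ2 : IntegrableOn (fun t => ‖θ t‖ ^ 2) (Ioc 0 T)) {q : ℝ} (hqθ : nrm θ T ≤ |q|)
    (r : ℝ → ℝ) (hr : IntegrableOn r (Ioc 0 T)) (x : ℝ) {z : ℝ} (hz1 : z < 1)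
    (hz : 1 - 1 / (T + 1) * Fal q (|q| + nrm θ T) * exp (nrm θ T ^ 2) ≤ z) :
    Admiss T θ (fun t => 1 / om T t) ∧
    ESOK T θ θ (fun t => 1 / om T t) q z ∧
    ∀ (y : ℝ → E d) (v : ℝ → ℝ), Admiss T y v →
      Jcost T x r θ y v ≤ Jcost T x r θ θ (fun t => 1 / om T t) := by
  have hadm : Admiss T θ fun t => 1 / om T t := admiss_one_div_om hθm hθ2
  have hterminal : log (1 - z) ≤
      nrm θ T ^ 2 - Vtot (fun t => 1 / om T t) T + fal q (nrm θ T) := by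
    rw [Vtot_one_div_om hT]
    exact log_one_sub_le_of_one_sub_le (by linarith) hz1 hz
  exact ⟨hadm,
    ESOK_self_of_terminal hθ2 hadm.integrableOn (fun t ht => (hadm.pos t ht).le) hqθ hterminal,
    fun y v h => h.Jcost_le hadm hr x⟩

/-- Theorem 4.10 of the paper. -/
theorem stmt12 {d : ℕ} (hd : 1 ≤ d) {T : ℝ} (hT : 0 < T)
    (θ : ℝ → E d) (hθm : Measurable θ)
    (hθ2 : IntegrableOn (fun t => ‖θ t‖ ^ 2) (Set.Ioc 0 T))
    {a qa : ℝ} (ha0 : 0 < a) (ha2 : a < 1 / 2) (hqneg : qa < 0)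
    (hquant : (∫ s in Set.Iic qa, Real.exp (-s ^ 2 / 2)) = a * Real.sqrt (2 * π))
    (r : ℝ → ℝ) (hr : IntegrableOn r (Set.Ioc 0 T)) {x : ℝ} (hx : 0 < x)
    (hqθ : max 1 (nrm θ T) < |qa|)
    {z : ℝ} (hz0 : 0 < z) (hz1 : z < 1)
    (hz2 : 1 - (1 / (T + 1)) * Fal qa (|qa| + nrm θ T) * Real.exp (nrm θ T ^ 2) < z) :
    Admiss T θ (fun t => 1 / om T t) ∧
    ESOK T θ θ (fun t => 1 / om T t) qa z ∧
    ∀ (y : ℝ → E d) (v : ℝ → ℝ), Admiss T y v → ESOK T θ y v qa z →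
      Jcost T x r θ y v ≤ Jcost T x r θ θ (fun t => 1 / om T t) := by
  obtain ⟨hadm, hES, hmax⟩ :=
    stmt12_general hT.le θ hθm hθ2 ((le_max_right _ _).trans hqθ.le) r hr x hz1 hz2.le
  exact ⟨hadm, hES, fun y v h _ => hmax y v h⟩
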